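/- Suppose μ_{n,i} = (1−κ_{n,i})·μ̃_{n,i} + κ_{n,i}·ν_{n,i}, where κ_{n,i} ∈ [0,1], μ̃_{n,i} ≪ P_{n,i}, and ν_{n,i}(N_{n,i}) = 1 for some P_{n,i}-null set N_{n,i}. Let ε̃_{n,i} = ε_{n,i}(1−κ_{n,i})/(1−ε_{n,i}κ_{n,i}), let Q̃_{n,i}, Q̃_(n), T̃_n be defined as Q_{n,i}, Q_(n), T_n with (μ̃_{n,i}, ε̃_{n,i}) in place of (μ_{n,i}, ε_{n,i}), and suppose T̃_n converges in distribution to ξ̃1 under P_(n) and to ξ̃2 under Q̃_(n) (values in [−∞,∞]). If Σ_{i=1}^{k_n} ε_{n,i}κ_{n,i} → c ∈ [0,∞], then T_n converges in distribution under P_(n) to ξ1 = ξ̃1 − c and under Q_(n) to ξ2 = ξ̃2 + X, where X is independent of ξ̃2 with P(X = −c) = e^{−c} and P(X = +∞) = 1 − e^{−c}; equivalently, the limiting laws satisfy ν1 = ν̃1 * δ_{−c} and ν2 = e^{−c}·(ν̃2 * δ_{−c}) + (1−e^{−c})·δ_{+∞}. In particular, if c = ∞, or if ξ̃1 ≡ −∞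 and ξ̃2 ≡ +∞, then ξ1 ≡ −∞ and ξ2 ≡ +∞. -/

import Mathlib

open MeasureTheory Filter Topology

noncomputable section

/-- Mixture `Q = (1-e)·P + e·μ`. -/
def Qmix {α : Type*} [MeasurableSpace α] (P μ : Measure α) (e : ℝ) : Measure α :=
  (ENNReal.ofReal (1 - e)) • P + (ENNReal.ofReal e) • μ

/-- Product null measure `P_(n) = ⊗_{i<k_n} P_{n,i}`. -/
def Pprod {α : Type*} [MeasurableSpace α] (P : ℕ → ℕ → Measure α) (k : ℕ → ℕ) (n : ℕ) :
    Measure (Fin (k n) → α) :=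
  Measure.pi (fun i => P n i)

/-- Product alternative measure `Q_(n) = ⊗_{i<k_n} Q_{n,i}`. -/
def Qprod {α : Type*} [MeasurableSpace α] (P μ : ℕ → ℕ → Measure α) (ε : ℕ → ℕ → ℝ)
    (k : ℕ → ℕ) (n : ℕ) : Measure (Fin (k n) → α) :=
  Measure.pi (fun i => Qmix (P n i) (μ n i) (ε n i))

/-- Extended likelihood ratio `dQ/dP` with values in `[0,∞]` (equal to `+∞` on the
`P`-singular part of `Q`), computed via densities w.r.t. `P + Q`. -/
def elr {α : Type*} [MeasurableSpace α] (Q P : Measure α) (a : α) : ENNReal :=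
  Q.rnDeriv (P + Q) a / P.rnDeriv (P + Q) a

/-- Log-likelihood ratio statistic `T_n = Σ_{i<k_n} log(dQ_{n,i}/dP_{n,i})(y_i)`,
with values in `[−∞,∞]`. -/
def Tstat {α : Type*} [MeasurableSpace α] (P μ : ℕ → ℕ → Measure α) (ε : ℕ → ℕ → ℝ)
    (k : ℕ → ℕ) (n : ℕ) (y : Fin (k n) → α) : EReal :=
  ∑ i : Fin (k n), ENNReal.log (elr (Qmix (P n i) (μ n i) (ε n i)) (P n i) (y i))

/-- Law of `T_n` under the null `P_(n)`. -/
def lawP {α : Type*} [MeasurableSpace α] (P μ : ℕ → ℕ → Measure α) (ε : ℕ → ℕ → ℝ)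
    (k : ℕ → ℕ) (n : ℕ) : Measure EReal :=
  (Pprod P k n).map (Tstat P μ ε k n)

/-- Law of `T_n` under the alternative `Q_(n)`. -/
def lawQ {α : Type*} [MeasurableSpace α] (P μ : ℕ → ℕ → Measure α) (ε : ℕ → ℕ → ℝ)
    (k : ℕ → ℕ) (n : ℕ) : Measure EReal :=
  (Qprod P μ ε k n).map (Tstat P μ ε k n)

/-- Weak convergence of a sequence of measures (convergence in distribution):
integrals of bounded continuous functions converge. -/
def WeakLim {β : Type*} [MeasurableSpace β] [TopologicalSpace β]
    (μs : ℕ → Measure β) (ν : Measure β) : Prop :=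
  ∀ f : BoundedContinuousFunction β ℝ,
    Tendsto (fun n => ∫ x, f x ∂(μs n)) atTop (nhds (∫ x, f x ∂ν))

end
noncomputable section

/-!
Since `ν` is singular to `P`, the alternative splits as `Q = (1 - εκ) • Q̃ + εκ • ν`, and `dQ/dP`
equals `(1 - εκ) dQ̃/dP` away from the part carried by `ν`, where it is `+∞`. With
`p_n = ∏ i, (1 - ε_{n,i} κ_{n,i})`, the law of `T_n` under `P_(n)` is therefore, for every `n`, the
law of `T̃_n` shifted by `log p_n`. Under `Q_(n)`, all observations come from the `Q̃_{n,i}` with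
probability `p_n`, and otherwise `T_n = +∞`.

As `ε_{n,i} κ_{n,i} → 0` uniformly in `i`, `p_n → exp (-c)`, and it remains to pass to the limit in
the shift and in the mixture. Addition on `[-∞, ∞]` is discontinuous only where `+∞` meets `-∞`,
which matters under `P_(n)` when `p_n → 0`; there `E_P exp T̃_n ≤ 1` and Markov's inequality prevent
`T̃_n` from compensating the shift. In the degenerate case `p_n` may fail to converge, and
compactness of `[0, ∞]` provides subsequences along which it does.
-/

open scoped ENNReal

section LikelihoodRatio

variable {α : Type*} [MeasurableSpace α] {P Q Qt ρ : Measure α}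

lemma measurable_elr (Q P : Measure α) : Measurable (elr Q P) :=
  (Measure.measurable_rnDeriv _ _).div (Measure.measurable_rnDeriv _ _)

lemma measurableSet_elr_ne_top (Q P : Measure α) : MeasurableSet {x | elr Q P x ≠ ⊤} :=
  (measurable_elr Q P (measurableSet_singleton ⊤)).compl

lemma elr_ae_eq_rnDeriv (Q P : Measure α) [SigmaFinite Q] [SigmaFinite P] :
    elr Q P =ᵐ[P] Q.rnDeriv P := by
  filter_upwards [Measure.rnDeriv_eq_div_rnDeriv_add Q P] with x hx
  rw [hx, elr, add_comm]

lemma lintegral_elr_le (Q P : Measure α) [SigmaFinite Q] [SigmaFinite P] :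
    ∫⁻ x, elr Q P x ∂P ≤ Q Set.univ := by
  rw [lintegral_congr_ae (elr_ae_eq_rnDeriv Q P)]
  exact Measure.lintegral_rnDeriv_le

lemma ae_elr_ne_zero (Q P : Measure α) [SigmaFinite Q] [SigmaFinite P] :
    ∀ᵐ x ∂Q, elr Q P x ≠ 0 := by
  have hac : Q ≪ P + Q := Measure.AbsolutelyContinuous.rfl.add_right' _
  filter_upwards [Measure.rnDeriv_pos hac, hac.ae_le (Measure.rnDeriv_ne_top P (P + Q))]
    with x hpos htop
  exact (ENNReal.div_pos hpos.ne' htop).ne'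

lemma ae_elr_eq_top_of_mutuallySingular [SigmaFinite Q] [SigmaFinite P]
    (hρQ : ρ ≪ Q) (hρP : ρ ⟂ₘ P) : ∀ᵐ x ∂ρ, elr Q P x = ⊤ := by
  obtain ⟨N, hN, hρN, hPN⟩ := hρP
  have hac : ρ ≪ P + Q := hρQ.trans (Measure.AbsolutelyContinuous.rfl.add_right' _)
  have hzero : ∀ᵐ x ∂(P + Q), x ∈ Nᶜ → P.rnDeriv (P + Q) x = 0 := by
    rw [← ae_restrict_iff' hN.compl]
    refine (lintegral_eq_zero_iff (Measure.measurable_rnDeriv _ _)).1 (le_antisymm ?_ zero_le)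
    exact (Measure.setLIntegral_rnDeriv_le Nᶜ).trans hPN.le
  have hpos : ∀ᵐ x ∂ρ, 0 < Q.rnDeriv (P + Q) x :=
    hρQ.ae_le (Measure.rnDeriv_pos (Measure.AbsolutelyContinuous.rfl.add_right' _))
  filter_upwards [hac.ae_le hzero, hpos, measure_eq_zero_iff_ae_notMem.1 hρN] with x h0 hx hxN
  rw [elr, h0 hxN, ENNReal.div_zero hx.ne']

lemma elr_smul_add_ae_eq [IsFiniteMeasure Qt] [SigmaFinite P] [IsFiniteMeasure ρ]
    {b : ℝ≥0∞} (hb : b ≠ ⊤) (hρ : ρ ⟂ₘ P) :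
    elr (b • Qt + ρ) P =ᵐ[P] fun x => b * elr Qt P x := by
  have : IsFiniteMeasure (b • Qt) := Qt.smul_finite hb
  filter_upwards [elr_ae_eq_rnDeriv (b • Qt + ρ) P, elr_ae_eq_rnDeriv Qt P,
    Measure.rnDeriv_add_of_mutuallySingular (b • Qt) ρ P hρ,
    Measure.rnDeriv_smul_left_of_ne_top Qt P hb] with x h1 h2 h3 h4
  rw [h1, h2, h3, h4, Pi.smul_apply, smul_eq_mul]

/- On the `P`-singular part of `Qt` both ratios are infinite. -/
lemma elr_smul_add_ae_eq_smul [IsFiniteMeasure Qt] [SigmaFinite P] [IsFiniteMeasure ρ]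
    {b : ℝ≥0∞} (hb : b ≠ ⊤) (hρ : ρ ⟂ₘ P) :
    elr (b • Qt + ρ) P =ᵐ[b • Qt] fun x => b * elr Qt P x := by
  rcases eq_or_ne b 0 with rfl | hb0
  · simp only [zero_smul, ae_zero]; exact Filter.eventually_bot
  have : IsFiniteMeasure (b • Qt) := Qt.smul_finite hb
  have hle : Qt ≪ b • Qt + ρ :=
    (Measure.absolutelyContinuous_smul hb0).trans (Measure.AbsolutelyContinuous.rfl.add_right _)
  have hsing : Qt.singularPart P ≪ Qt := (Qt.singularPart_le P).absolutelyContinuous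
  refine Measure.smul_absolutelyContinuous.ae_eq ?_
  have hae : ∀ᵐ x ∂(Qt.singularPart P + P.withDensity (Qt.rnDeriv P)),
      elr (b • Qt + ρ) P x = b * elr Qt P x := by
    refine ae_add_measure_iff.2 ⟨?_, ?_⟩
    · filter_upwards [ae_elr_eq_top_of_mutuallySingular (hsing.trans hle)
          (Qt.mutuallySingular_singularPart P),
        ae_elr_eq_top_of_mutuallySingular hsing (Qt.mutuallySingular_singularPart P)]
        with x h h'
      rw [h, h', ENNReal.mul_top hb0]
    · exact (withDensity_absolutelyContinuous _ _).ae_le (elr_smul_add_ae_eq hb hρ)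
  rwa [Qt.singularPart_add_rnDeriv P] at hae

lemma restrict_smul_add_elr_ne_top [SigmaFinite P] [IsFiniteMeasure Qt] [IsFiniteMeasure ρ]
    {b : ℝ≥0∞} (hb : b ≠ ⊤) (hρ : ρ ⟂ₘ P) :
    (b • Qt + ρ).restrict {x | elr (b • Qt + ρ) P x ≠ ⊤} =
      (b • Qt).restrict {x | elr (b • Qt + ρ) P x ≠ ⊤} := by
  have : IsFiniteMeasure (b • Qt) := Qt.smul_finite hb
  have htop : ∀ᵐ x ∂ρ, elr (b • Qt + ρ) P x = ⊤ :=
    ae_elr_eq_top_of_mutuallySingular (Measure.AbsolutelyContinuous.rfl.add_right' _) hρ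
  have hρ_null : ρ.restrict {x | elr (b • Qt + ρ) P x ≠ ⊤} = 0 :=
    Measure.restrict_eq_zero.2 (ae_iff.1 htop)
  rw [Measure.restrict_add, hρ_null, add_zero]

end LikelihoodRatio

section ProductLikelihoodRatio

variable {ι : Type*} [Fintype ι] {X : ι → Type*} [∀ i, MeasurableSpace (X i)]

lemma lintegral_pi_prod_eq_prod_lintegral (P : ∀ i, Measure (X i))
    [∀ i, IsProbabilityMeasure (P i)] {g : ∀ i, X i → ℝ≥0∞} (hg : ∀ i, Measurable (g i)) :
    ∫⁻ y, ∏ i, g i (y i) ∂(Measure.pi P) = ∏ i, ∫⁻ x, g i x ∂(P i) := by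
  rw [ProbabilityTheory.lintegral_prod_eq_prod_lintegral_of_indepFun Finset.univ
    (fun i (y : ∀ i, X i) => g i (y i))
    (ProbabilityTheory.iIndepFun_pi fun i => (hg i).aemeasurable)
    (fun i => (hg i).comp (measurable_pi_apply i))]
  exact Finset.prod_congr rfl fun i _ => (measurePreserving_eval P i).lintegral_comp (hg i)

lemma ae_pi_of_forall_ae {M : ∀ i, Measure (X i)} [∀ i, SigmaFinite (M i)]
    {p : ∀ i, X i → Prop} (h : ∀ i, ∀ᵐ x ∂(M i), p i x) :
    ∀ᵐ y ∂(Measure.pi M), ∀ i, p i (y i) :=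
  Measure.ae_pi_le_pi (Filter.eventually_pi h)

lemma pi_smul_measure (Q : ∀ i, Measure (X i)) [∀ i, IsFiniteMeasure (Q i)] {b : ι → ℝ≥0∞}
    (hb : ∀ i, b i ≠ ⊤) : Measure.pi (fun i => b i • Q i) = (∏ i, b i) • Measure.pi Q := by
  have (i : ι) : IsFiniteMeasure (b i • Q i) := (Q i).smul_finite (hb i)
  exact Measure.pi_eq fun s _ => by simp [Measure.pi_pi, Finset.prod_mul_distrib]

lemma sum_ennreal_log {κ : Type*} (s : Finset κ) (g : κ → ℝ≥0∞) :
    ∑ i ∈ s, ENNReal.log (g i) = ENNReal.log (∏ i ∈ s, g i) := by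
  classical
  induction s using Finset.induction_on with
  | empty => simp
  | insert i s hi ih =>
    rw [Finset.sum_insert hi, Finset.prod_insert hi, ENNReal.log_mul_add, ih]

/-- The log-likelihood ratio, with values in `[-∞, ∞]`, of the product of the `Q i` with respect
to the product of the `P i`. -/
def piLLR (Q P : ∀ i, Measure (X i)) (y : ∀ i, X i) : EReal :=
  ∑ i, ENNReal.log (elr (Q i) (P i) (y i))

lemma piLLR_eq_log_prod (Q P : ∀ i, Measure (X i)) (y : ∀ i, X i) :
    piLLR Q P y = ENNReal.log (∏ i, elr (Q i) (P i) (y i)) :=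
  sum_ennreal_log _ _

lemma measurable_piLLR (Q P : ∀ i, Measure (X i)) : Measurable (piLLR Q P) := by
  simp only [funext (piLLR_eq_log_prod Q P)]
  exact (Finset.measurable_fun_prod _ fun i _ =>
    (measurable_elr _ _).comp (measurable_pi_apply i)).ennreal_log

lemma piLLR_eq_top_of_notMem_pi {Q P : ∀ i, Measure (X i)} {y : ∀ i, X i}
    (h0 : ∀ i, elr (Q i) (P i) (y i) ≠ 0)
    (hy : y ∉ Set.univ.pi fun i => {x | elr (Q i) (P i) x ≠ ⊤}) : piLLR Q P y = ⊤ := by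
  obtain ⟨i, hi⟩ : ∃ i, elr (Q i) (P i) (y i) = ⊤ := by
    simpa only [Set.mem_univ_pi, Set.mem_ofPred_eq, not_forall, not_not] using hy
  rw [piLLR_eq_log_prod, ENNReal.log_eq_top_iff]
  exact WithTop.prod_eq_top (Finset.mem_univ i) hi fun j _ => h0 j

lemma lintegral_exp_map_piLLR_le (Q P : ∀ i, Measure (X i)) [∀ i, IsProbabilityMeasure (P i)]
    [∀ i, SigmaFinite (Q i)] :
    ∫⁻ x, EReal.exp x ∂((Measure.pi P).map (piLLR Q P)) ≤ ∏ i, Q i Set.univ := by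
  rw [lintegral_map EReal.measurable_exp (measurable_piLLR Q P)]
  simp_rw [piLLR_eq_log_prod, ENNReal.exp_log]
  rw [lintegral_pi_prod_eq_prod_lintegral P fun i => measurable_elr (Q i) (P i)]
  exact Finset.prod_le_prod' fun i _ => lintegral_elr_le _ _

end ProductLikelihoodRatio

section LogShift

/-- The image of a law on `[-∞, ∞]` under `x ↦ x + log p`. For `p = 0` all mass moves to `-∞`,
since `x + ⊥ = ⊥` in `EReal` even for `x = ⊤`. -/
def logShift (p : ℝ≥0∞) (ν : Measure EReal) : Measure EReal :=
  ν.map (fun x => x + ENNReal.log p)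

/-- The law of `ξ + X`, where `ξ` has law `ν` and `X`, independent of `ξ`, equals `log p` with
probability `p` and `+∞` otherwise (with the convention of `logShift` for `p = 0`). -/
def logShiftTop (p : ℝ≥0∞) (ν : Measure EReal) : Measure EReal :=
  p • logShift p ν + (1 - p) • Measure.dirac ⊤

lemma measurable_add_log (p : ℝ≥0∞) : Measurable fun x : EReal => x + ENNReal.log p :=
  measurable_id.add_const _

instance isProbabilityMeasure_logShift (p : ℝ≥0∞) (ν : Measure EReal) [IsProbabilityMeasure ν] :
    IsProbabilityMeasure (logShift p ν) :=
  Measure.isProbabilityMeasure_map (measurable_add_log p).aemeasurable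

lemma integral_logShift (p : ℝ≥0∞) (ν : Measure EReal) (f : BoundedContinuousFunction EReal ℝ) :
    ∫ x, f x ∂(logShift p ν) = ∫ x, f (x + ENNReal.log p) ∂ν :=
  integral_map (measurable_add_log p).aemeasurable f.continuous.aestronglyMeasurable

lemma lintegral_exp_logShift (p : ℝ≥0∞) (ν : Measure EReal) :
    ∫⁻ x, EReal.exp x ∂(logShift p ν) = (∫⁻ x, EReal.exp x ∂ν) * p := by
  rw [logShift, lintegral_map EReal.measurable_exp (measurable_add_log p)]
  simp_rw [EReal.exp_add, ENNReal.exp_log]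
  exact lintegral_mul_const _ EReal.measurable_exp

lemma logShift_zero (ν : Measure EReal) [IsProbabilityMeasure ν] :
    logShift 0 ν = Measure.dirac ⊥ := by
  simp [logShift, Measure.map_const]

lemma logShift_dirac_bot (p : ℝ≥0∞) : logShift p (Measure.dirac ⊥) = Measure.dirac ⊥ := by
  rw [logShift, Measure.map_dirac' (measurable_add_log p), EReal.bot_add]

lemma logShift_ofReal_exp (x : ℝ) (ν : Measure EReal) :
    logShift (ENNReal.ofReal (Real.exp x)) ν = ν.map (fun y : EReal => y + (x : EReal)) := by
  rw [logShift, ENNReal.log_ofReal_of_pos (Real.exp_pos x), Real.log_exp]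

lemma integral_logShiftTop {p : ℝ≥0∞} (hp : p ≠ ⊤) (ν : Measure EReal) [IsProbabilityMeasure ν]
    (f : BoundedContinuousFunction EReal ℝ) :
    ∫ x, f x ∂(logShiftTop p ν) = p.toReal * ∫ x, f x ∂(logShift p ν) + (1 - p).toReal * f ⊤ := by
  rw [logShiftTop, integral_add_measure ((f.integrable _).smul_measure hp)
    ((f.integrable _).smul_measure (by simp)), integral_smul_measure, integral_smul_measure,
    integral_dirac, smul_eq_mul, smul_eq_mul]

lemma logShiftTop_zero (ν : Measure EReal) : logShiftTop 0 ν = Measure.dirac ⊤ := by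
  simp [logShiftTop]

lemma logShiftTop_dirac_top {p : ℝ≥0∞} (hp : p ≤ 1) :
    logShiftTop p (Measure.dirac ⊤) = Measure.dirac ⊤ := by
  rcases eq_or_ne p 0 with rfl | h0
  · exact logShiftTop_zero _
  · rw [logShiftTop, logShift, Measure.map_dirac' (measurable_add_log p),
      EReal.top_add_of_ne_bot (by simpa using h0), ← add_smul, add_tsub_cancel_of_le hp, one_smul]

lemma logShiftTop_ofReal_exp (x : ℝ) (ν : Measure EReal) :
    logShiftTop (ENNReal.ofReal (Real.exp x)) ν =
      ENNReal.ofReal (Real.exp x) • ν.map (fun y : EReal => y + (x : EReal)) +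
        ENNReal.ofReal (1 - Real.exp x) • Measure.dirac ⊤ := by
  rw [logShiftTop, logShift_ofReal_exp, ENNReal.ofReal_sub 1 (Real.exp_pos x).le,
    ENNReal.ofReal_one]

end LogShift

section PartlyConstantMap

variable {Ω β : Type*} [MeasurableSpace Ω] [MeasurableSpace β] {μ ν : Measure Ω} {f : Ω → β}
  {E : Set Ω} {c : β}

lemma map_eq_map_restrict_add_dirac (hf : Measurable f) (hE : MeasurableSet E)
    (hc : ∀ᵐ x ∂μ, x ∉ E → f x = c) :
    μ.map f = (μ.restrict E).map f + μ Eᶜ • Measure.dirac c := by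
  have hconst : f =ᵐ[μ.restrict Eᶜ] fun _ => c := (ae_restrict_iff' hE.compl).2 hc
  conv_lhs => rw [← Measure.restrict_add_restrict_compl (μ := μ) hE, Measure.map_add _ _ hf]
  rw [Measure.map_congr hconst, Measure.map_const, Measure.restrict_apply_univ]

lemma map_eq_map_add_dirac_of_restrict_eq [IsFiniteMeasure μ] (hf : Measurable f)
    (hE : MeasurableSet E) (hμν : μ.restrict E = ν.restrict E)
    (hle : ν Set.univ ≤ μ Set.univ) (hμ : ∀ᵐ x ∂μ, x ∉ E → f x = c)
    (hν : ∀ᵐ x ∂ν, x ∉ E → f x = c) :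
    μ.map f = ν.map f + (μ Set.univ - ν Set.univ) • Measure.dirac c := by
  have hE_eq : μ E = ν E := by
    rw [← Measure.restrict_apply_univ E, hμν, Measure.restrict_apply_univ]
  have hmass : μ Eᶜ = ν Eᶜ + (μ Set.univ - ν Set.univ) := by
    rw [measure_compl hE (measure_ne_top μ E), measure_compl hE (hE_eq ▸ measure_ne_top μ E),
      hE_eq, add_comm, tsub_add_tsub_cancel hle (measure_mono (Set.subset_univ E))]
  rw [map_eq_map_restrict_add_dirac hf hE hμ, map_eq_map_restrict_add_dirac hf hE hν, hμν, hmass,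
    add_smul, add_assoc]

end PartlyConstantMap

section LawDecomposition

variable {ι : Type*} [Fintype ι] {X : ι → Type*} [∀ i, MeasurableSpace (X i)]
  {P Qt ρ : ∀ i, Measure (X i)} {b : ι → ℝ≥0∞}

lemma piLLR_smul_add_ae_eq {M : ∀ i, Measure (X i)} [∀ i, SigmaFinite (M i)]
    (h : ∀ i, elr (b i • Qt i + ρ i) (P i) =ᵐ[M i] fun x => b i * elr (Qt i) (P i) x) :
    piLLR (fun i => b i • Qt i + ρ i) P =ᵐ[Measure.pi M]
      fun y => piLLR Qt P y + ENNReal.log (∏ i, b i) := by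
  filter_upwards [ae_pi_of_forall_ae h] with y hy
  rw [piLLR_eq_log_prod, piLLR_eq_log_prod, Finset.prod_congr rfl fun i _ => hy i,
    Finset.prod_mul_distrib, ENNReal.log_mul_add, add_comm]

lemma map_piLLR_add_log (M : Measure (∀ i, X i)) (p : ℝ≥0∞) :
    M.map (fun y => piLLR Qt P y + ENNReal.log p) = logShift p (M.map (piLLR Qt P)) :=
  (Measure.map_map (measurable_id.add_const _) (measurable_piLLR Qt P)).symm

lemma map_piLLR_smul_add_pi [∀ i, SigmaFinite (P i)] [∀ i, IsFiniteMeasure (Qt i)]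
    [∀ i, IsFiniteMeasure (ρ i)] (hb : ∀ i, b i ≠ ⊤) (hρ : ∀ i, ρ i ⟂ₘ P i) :
    (Measure.pi P).map (piLLR (fun i => b i • Qt i + ρ i) P) =
      logShift (∏ i, b i) ((Measure.pi P).map (piLLR Qt P)) := by
  rw [← map_piLLR_add_log]
  exact Measure.map_congr (piLLR_smul_add_ae_eq fun i => elr_smul_add_ae_eq (hb i) (hρ i))

lemma map_piLLR_smul_add_pi_smul [∀ i, SigmaFinite (P i)] [∀ i, IsFiniteMeasure (Qt i)]
    [∀ i, IsFiniteMeasure (ρ i)] (hb : ∀ i, b i ≠ ⊤) (hρ : ∀ i, ρ i ⟂ₘ P i) :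
    (Measure.pi fun i => b i • Qt i).map (piLLR (fun i => b i • Qt i + ρ i) P) =
      (∏ i, b i) • logShift (∏ i, b i) ((Measure.pi Qt).map (piLLR Qt P)) := by
  have (i : ι) : IsFiniteMeasure (b i • Qt i) := (Qt i).smul_finite (hb i)
  rw [← map_piLLR_add_log, ← Measure.map_smul, ← pi_smul_measure Qt hb]
  exact Measure.map_congr (piLLR_smul_add_ae_eq fun i => elr_smul_add_ae_eq_smul (hb i) (hρ i))

lemma map_piLLR_pi_smul_add [∀ i, SigmaFinite (P i)] [∀ i, IsProbabilityMeasure (Qt i)]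
    [∀ i, IsFiniteMeasure (ρ i)] [∀ i, IsProbabilityMeasure (b i • Qt i + ρ i)]
    (hb : ∀ i, b i ≤ 1) (hρ : ∀ i, ρ i ⟂ₘ P i) :
    (Measure.pi fun i => b i • Qt i + ρ i).map (piLLR (fun i => b i • Qt i + ρ i) P) =
      logShiftTop (∏ i, b i) ((Measure.pi Qt).map (piLLR Qt P)) := by
  have hb' (i : ι) : b i ≠ ⊤ := ne_top_of_le_ne_top ENNReal.one_ne_top (hb i)
  have (i : ι) : IsFiniteMeasure (b i • Qt i) := (Qt i).smul_finite (hb' i)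
  have hne (i : ι) := ae_elr_ne_zero (b i • Qt i + ρ i) (P i)
  have hac (i : ι) : b i • Qt i ≪ b i • Qt i + ρ i := Measure.AbsolutelyContinuous.rfl.add_right _
  have hrestrict : (Measure.pi fun i => b i • Qt i + ρ i).restrict
        (Set.univ.pi fun i => {x | elr (b i • Qt i + ρ i) (P i) x ≠ ⊤}) =
      (Measure.pi fun i => b i • Qt i).restrict
        (Set.univ.pi fun i => {x | elr (b i • Qt i + ρ i) (P i) x ≠ ⊤}) := by
    simp_rw [Measure.restrict_pi_pi, restrict_smul_add_elr_ne_top (hb' _) (hρ _)]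
  have hmass : (Measure.pi fun i => b i • Qt i) Set.univ = ∏ i, b i := by
    rw [pi_smul_measure Qt hb', Measure.smul_apply, measure_univ, smul_eq_mul, mul_one]
  rw [map_eq_map_add_dirac_of_restrict_eq (measurable_piLLR _ _)
    (MeasurableSet.univ_pi fun i => measurableSet_elr_ne_top _ _) hrestrict
    (by rw [hmass, measure_univ]; exact Finset.prod_le_one' fun i _ => hb i)
    ((ae_pi_of_forall_ae hne).mono fun _ => piLLR_eq_top_of_notMem_pi)
    ((ae_pi_of_forall_ae fun i => (hac i).ae_le (hne i)).mono fun _ => piLLR_eq_top_of_notMem_pi),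
    map_piLLR_smul_add_pi_smul hb' hρ, hmass, measure_univ, logShiftTop]

end LawDecomposition

section WeakLimits

variable {β : Type*} [MeasurableSpace β]

lemma eq_dirac_of_singleton_eq_one [MeasurableSingletonClass β]
    {ν : Measure β} [IsProbabilityMeasure ν] {b : β} (h : ν {b} = 1) : ν = Measure.dirac b := by
  have hae : ∀ᵐ x ∂ν, x ∈ ({b} : Set β) :=
    (prob_compl_eq_zero_iff (measurableSet_singleton b)).2 h
  rw [← Measure.restrict_eq_self_of_ae_mem hae, Measure.restrict_singleton, h, one_smul]

variable [TopologicalSpace β] {A : ℕ → Measure β} {ν : Measure β}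

lemma WeakLim.comp_tendsto (hA : WeakLim A ν) {φ : ℕ → ℕ} (hφ : Tendsto φ atTop atTop) :
    WeakLim (fun n => A (φ n)) ν :=
  fun f => (hA f).comp hφ

lemma weakLim_of_forall_tendsto_subseq {X : Type*} [TopologicalSpace X]
    [FirstCountableTopology X] [CompactSpace X] (x : ℕ → X)
    (h : ∀ (φ : ℕ → ℕ) (a : X), Tendsto φ atTop atTop → Tendsto (x ∘ φ) atTop (𝓝 a) →
      WeakLim (fun n => A (φ n)) ν) : WeakLim A ν := by
  intro f
  refine tendsto_of_subseq_tendsto fun φ hφ => ?_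
  obtain ⟨a, ψ, hψ, hx⟩ := CompactSpace.tendsto_subseq (x ∘ φ)
  exact ⟨ψ, h (φ ∘ ψ) a (hφ.comp hψ.tendsto_atTop) hx f⟩

lemma WeakLim.tendsto_integral_of_tendstoUniformly [OpensMeasurableSpace β]
    [∀ n, IsProbabilityMeasure (A n)] (hA : WeakLim A ν) {F : ℕ → β → ℝ}
    {g : BoundedContinuousFunction β ℝ} (hF : ∀ n, Integrable (F n) (A n))
    (hFg : TendstoUniformly F g atTop) :
    Tendsto (fun n => ∫ x, F n x ∂(A n)) atTop (𝓝 (∫ x, g x ∂ν)) := by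
  have hdist : Tendsto (fun n => dist (∫ x, F n x ∂(A n)) (∫ x, g x ∂(A n))) atTop (𝓝 0) := by
    refine Metric.tendsto_atTop'.2 fun δ hδ => ?_
    obtain ⟨N, hN⟩ := eventually_atTop.1 (Metric.tendstoUniformly_iff.1 hFg (δ / 2) (half_pos hδ))
    refine ⟨N, fun n hn => ?_⟩
    have hbound : ∀ x, ‖F n x - g x‖ ≤ δ / 2 := fun x => by
      rw [← dist_eq_norm, dist_comm]; exact (hN n hn.le x).le
    have hint := norm_integral_le_of_norm_le_const (μ := A n) (ae_of_all _ hbound)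
    rw [integral_sub (hF n) (g.integrable _), probReal_univ, mul_one, ← dist_eq_norm] at hint
    rw [Real.dist_0_eq_abs, abs_of_nonneg dist_nonneg]
    exact hint.trans_lt (half_lt_self hδ)
  exact (tendsto_iff_of_dist hdist).2 (hA g)

lemma weakLim_dirac [OpensMeasurableSpace β] [∀ n, IsProbabilityMeasure (A n)] {b : β}
    (h : ∀ F, IsClosed F → b ∉ F → Tendsto (fun n => A n F) atTop (𝓝 0)) :
    WeakLim A (Measure.dirac b) := by
  let Ap (n : ℕ) : ProbabilityMeasure β := ⟨A n, inferInstance⟩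
  suffices Tendsto Ap atTop (𝓝 (diracProba b)) from
    ProbabilityMeasure.tendsto_iff_forall_integral_tendsto.1 this
  refine tendsto_of_forall_isClosed_limsup_le' fun F hF => ?_
  by_cases hb : b ∈ F
  · rw [diracProba_toMeasure_apply_of_mem hb]
    exact limsup_le_of_le (h := .of_forall fun n => prob_le_one)
  · exact (h F hF hb).limsup_eq.trans_le zero_le

lemma weakLim_dirac_bot {A : ℕ → Measure EReal} [∀ n, IsProbabilityMeasure (A n)]
    (h : Tendsto (fun n => ∫⁻ x, EReal.exp x ∂(A n)) atTop (𝓝 0)) :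
    WeakLim A (Measure.dirac ⊥) := by
  refine weakLim_dirac fun F hF hbot => ?_
  obtain ⟨y, hy⟩ := EReal.mem_nhds_bot_iff.1 (hF.isOpen_compl.mem_nhds hbot)
  have hexp_pos : EReal.exp y ≠ 0 := by simp [Real.exp_pos]
  have hF_le (n : ℕ) : A n F ≤ (∫⁻ x, EReal.exp x ∂(A n)) / EReal.exp y := by
    refine (measure_mono fun x hx => ?_).trans
      (meas_ge_le_lintegral_div EReal.measurable_exp.aemeasurable hexp_pos (by simp))
    exact EReal.exp_strictMono.monotone (not_lt.1 fun hxy => hy hxy hx)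
  refine tendsto_of_tendsto_of_tendsto_of_le_of_le tendsto_const_nhds ?_ (fun _ => zero_le) hF_le
  simpa using ENNReal.Tendsto.div_const h (.inr hexp_pos)

end WeakLimits

section LogShiftLimits

lemma continuousAt_add_log {x : EReal} {p : ℝ≥0∞} (h0 : p ≠ 0) (htop : p ≠ ⊤) :
    ContinuousAt (fun q : ℝ≥0∞ × EReal => q.2 + ENNReal.log q.1) (p, x) := by
  have hlog : ENNReal.log p ≠ ⊥ ∧ ENNReal.log p ≠ ⊤ := by simp [h0, htop]
  exact ContinuousAt.comp (f := fun q : ℝ≥0∞ × EReal => (q.2, ENNReal.log q.1))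
    (EReal.continuousAt_add (.inr hlog.1) (.inr hlog.2))
    (continuous_snd.prodMk (ENNReal.continuous_log.comp continuous_fst)).continuousAt

lemma continuous_add_log {p : ℝ≥0∞} (h0 : p ≠ 0) (htop : p ≠ ⊤) :
    Continuous fun x : EReal => x + ENNReal.log p :=
  continuous_iff_continuousAt.2 fun _ =>
    ContinuousAt.comp (f := fun x : EReal => (p, x)) (continuousAt_add_log h0 htop)
      (Continuous.prodMk_right p).continuousAt

lemma tendstoUniformly_comp_add_log {E : Type*} [UniformSpace E] {f : EReal → E}
    (hf : Continuous f) {p₀ : ℝ≥0∞} (h0 : p₀ ≠ 0) (htop : p₀ ≠ ⊤) :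
    TendstoUniformly (fun p x => f (x + ENNReal.log p)) (fun x => f (x + ENNReal.log p₀))
      (𝓝 p₀) := by
  intro u hu
  have hcont : ContinuousOn
      (Function.uncurry fun (p : ℝ≥0∞) (x : EReal) => f (x + ENNReal.log p))
      (Set.Ioo 0 ⊤ ×ˢ Set.univ) := fun q hq =>
    (hf.continuousAt.comp (continuousAt_add_log hq.1.1.ne' hq.1.2.ne)).continuousWithinAt
  have hmem : p₀ ∈ Set.Ioo (0 : ℝ≥0∞) ⊤ := ⟨pos_iff_ne_zero.2 h0, lt_top_iff_ne_top.2 htop⟩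
  obtain ⟨v, hv, hvu⟩ :=
    isCompact_univ.mem_uniformity_of_prod hcont hmem (tendsto_swap_uniformity hu)
  rw [isOpen_Ioo.nhdsWithin_eq hmem] at hv
  filter_upwards [hv] with p hp x using hvu p hp x (Set.mem_univ x)

variable {A : ℕ → Measure EReal} {ν : Measure EReal} [∀ n, IsProbabilityMeasure (A n)]
  {p : ℕ → ℝ≥0∞} {p₀ : ℝ≥0∞}

lemma weakLim_logShift (hA : WeakLim A ν) (hp : Tendsto p atTop (𝓝 p₀)) (h0 : p₀ ≠ 0)
    (htop : p₀ ≠ ⊤) :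
    WeakLim (fun n => logShift (p n) (A n)) (logShift p₀ ν) := by
  intro f
  simp_rw [integral_logShift]
  let g := f.compContinuous ⟨_, continuous_add_log h0 htop⟩
  have hint (n : ℕ) : Integrable (fun x => f (x + ENNReal.log (p n))) (A n) :=
    .of_bound (f.continuous.measurable.comp (measurable_add_log _)).aestronglyMeasurable ‖f‖
      (ae_of_all _ fun x => f.norm_coe_le_norm _)
  have hunif : TendstoUniformly (fun n x => f (x + ENNReal.log (p n))) g atTop :=
    fun u hu => hp.eventually (tendstoUniformly_comp_add_log f.continuous h0 htop u hu)
  exact hA.tendsto_integral_of_tendstoUniformly hint hunif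

/- When `p₀ = 0`, Markov's inequality for `exp` shows that the mass of `A n` far to the right cannot
compensate the shift by `log (p n) → -∞`. -/
lemma weakLim_logShift_of_lintegral_exp_le [IsProbabilityMeasure ν] (hA : WeakLim A ν)
    {C : ℝ≥0∞} (hC : C ≠ ⊤) (hexp : ∀ n, ∫⁻ x, EReal.exp x ∂(A n) ≤ C)
    (hp : Tendsto p atTop (𝓝 p₀)) (htop : p₀ ≠ ⊤) :
    WeakLim (fun n => logShift (p n) (A n)) (logShift p₀ ν) := by
  rcases eq_or_ne p₀ 0 with rfl | h0
  · rw [logShift_zero]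
    refine weakLim_dirac_bot ?_
    simp_rw [lintegral_exp_logShift]
    refine tendsto_of_tendsto_of_tendsto_of_le_of_le tendsto_const_nhds ?_ (fun _ => zero_le)
      fun n => mul_le_mul_left (hexp n) (p n)
    simpa using ENNReal.Tendsto.const_mul hp (.inr hC)
  · exact weakLim_logShift hA hp h0 htop

lemma weakLim_logShift_dirac_bot (hA : WeakLim A (Measure.dirac ⊥)) {C : ℝ≥0∞} (hC : C ≠ ⊤)
    (hexp : ∀ n, ∫⁻ x, EReal.exp x ∂(A n) ≤ C) (hp : ∀ n, p n ≤ 1) :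
    WeakLim (fun n => logShift (p n) (A n)) (Measure.dirac ⊥) := by
  refine weakLim_of_forall_tendsto_subseq p fun φ a hφ hpa => ?_
  have ha : a ≠ ⊤ := ne_top_of_le_ne_top ENNReal.one_ne_top (le_of_tendsto' hpa fun n => hp (φ n))
  rw [← logShift_dirac_bot a]
  exact weakLim_logShift_of_lintegral_exp_le (hA.comp_tendsto hφ) hC
    (fun n => hexp (φ n)) hpa ha

lemma weakLim_logShiftTop [IsProbabilityMeasure ν] (hA : WeakLim A ν)
    (hp : Tendsto p atTop (𝓝 p₀)) (hp1 : ∀ n, p n ≤ 1) :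
    WeakLim (fun n => logShiftTop (p n) (A n)) (logShiftTop p₀ ν) := by
  intro f
  have htop (n : ℕ) : p n ≠ ⊤ := ne_top_of_le_ne_top ENNReal.one_ne_top (hp1 n)
  have htop₀ : p₀ ≠ ⊤ := ne_top_of_le_ne_top ENNReal.one_ne_top (le_of_tendsto' hp hp1)
  have hp_real : Tendsto (fun n => (p n).toReal) atTop (𝓝 p₀.toReal) :=
    (ENNReal.tendsto_toReal htop₀).comp hp
  have hq_real : Tendsto (fun n => (1 - p n).toReal) atTop (𝓝 (1 - p₀).toReal) :=
    (ENNReal.tendsto_toReal (by simp)).comp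
      (ENNReal.Tendsto.sub tendsto_const_nhds hp (.inl ENNReal.one_ne_top))
  simp_rw [integral_logShiftTop (htop _), integral_logShiftTop htop₀]
  refine Tendsto.add ?_ (hq_real.mul_const _)
  rcases eq_or_ne p₀ 0 with rfl | h0
  · rw [ENNReal.toReal_zero] at hp_real ⊢
    rw [zero_mul]
    refine hp_real.zero_mul_isBoundedUnder_le (isBoundedUnder_of ⟨‖f‖, fun n => ?_⟩)
    exact f.norm_integral_le_norm _
  · exact hp_real.mul (weakLim_logShift hA hp h0 htop₀ f)

lemma weakLim_logShiftTop_dirac_top (hA : WeakLim A (Measure.dirac ⊤)) (hp : ∀ n, p n ≤ 1) :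
    WeakLim (fun n => logShiftTop (p n) (A n)) (Measure.dirac ⊤) := by
  refine weakLim_of_forall_tendsto_subseq p fun φ a hφ hpa => ?_
  rw [← logShiftTop_dirac_top (le_of_tendsto' hpa fun n => hp (φ n))]
  exact weakLim_logShiftTop (hA.comp_tendsto hφ) hpa fun n => hp (φ n)

end LogShiftLimits

section ProductLimits

variable {ι κ : Type*} {l : Filter κ} {s : κ → Finset ι} {a : κ → ι → ℝ}

lemma prod_one_sub_le_exp_neg_sum {t : Finset ι} {x : ι → ℝ} (hx : ∀ i ∈ t, x i ≤ 1) :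
    ∏ i ∈ t, (1 - x i) ≤ Real.exp (-∑ i ∈ t, x i) := by
  rw [← Finset.sum_neg_distrib, Real.exp_sum]
  exact Finset.prod_le_prod (fun i hi => sub_nonneg.2 (hx i hi))
    fun i _ => Real.one_sub_le_exp_neg (x i)

lemma exp_neg_div_one_sub_le {x M : ℝ} (hx : 0 ≤ x) (hxM : x ≤ M) (hM : M < 1) :
    Real.exp (-(x / (1 - M))) ≤ 1 - x := by
  have hpos : 0 < 1 - x := sub_pos.2 (hxM.trans_lt hM)
  rw [← Real.le_log_iff_exp_le hpos]
  calc -(x / (1 - M)) ≤ -(x / (1 - x)) := by gcongr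
    _ = 1 - (1 - x)⁻¹ := by field_simp; ring
    _ ≤ Real.log (1 - x) := Real.one_sub_inv_le_log_of_pos hpos

lemma exp_neg_sum_div_le_prod_one_sub {t : Finset ι} {x : ι → ℝ} {M : ℝ} (hM : M < 1)
    (hx : ∀ i ∈ t, 0 ≤ x i) (hxM : ∀ i ∈ t, x i ≤ M) :
    Real.exp (-((∑ i ∈ t, x i) / (1 - M))) ≤ ∏ i ∈ t, (1 - x i) := by
  rw [Finset.sum_div, ← Finset.sum_neg_distrib, Real.exp_sum]
  exact Finset.prod_le_prod (fun _ _ => (Real.exp_pos _).le)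
    fun i hi => exp_neg_div_one_sub_le (hx i hi) (hxM i hi) hM

lemma tendsto_prod_one_sub {M : κ → ℝ} {c : ℝ} (hM : Tendsto M l (𝓝 0))
    (ha : ∀ n, ∀ i ∈ s n, 0 ≤ a n i) (haM : ∀ n, ∀ i ∈ s n, a n i ≤ M n)
    (hsum : Tendsto (fun n => ∑ i ∈ s n, a n i) l (𝓝 c)) :
    Tendsto (fun n => ∏ i ∈ s n, (1 - a n i)) l (𝓝 (Real.exp (-c))) := by
  have hM_lt : ∀ᶠ n in l, M n < 1 := hM.eventually_lt_const one_pos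
  have hlower : Tendsto (fun n => Real.exp (-((∑ i ∈ s n, a n i) / (1 - M n)))) l
      (𝓝 (Real.exp (-c))) := by
    simpa using (hsum.div (hM.const_sub 1) (by norm_num)).neg.rexp
  refine tendsto_of_tendsto_of_tendsto_of_le_of_le' hlower hsum.neg.rexp ?_ ?_
  · filter_upwards [hM_lt] with n hn using exp_neg_sum_div_le_prod_one_sub hn (ha n) (haM n)
  · filter_upwards [hM_lt] with n hn using
      prod_one_sub_le_exp_neg_sum fun i hi => (haM n i hi).trans hn.le

lemma tendsto_prod_one_sub_zero (ha : ∀ n, ∀ i ∈ s n, a n i ≤ 1)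
    (hsum : Tendsto (fun n => ∑ i ∈ s n, a n i) l atTop) :
    Tendsto (fun n => ∏ i ∈ s n, (1 - a n i)) l (𝓝 0) :=
  squeeze_zero (fun n => Finset.prod_nonneg fun i hi => sub_nonneg.2 (ha n i hi))
    (fun n => prod_one_sub_le_exp_neg_sum (ha n))
    (Real.tendsto_exp_neg_atTop_nhds_zero.comp hsum)

end ProductLimits

section DetectionModel

variable {α : Type*} [MeasurableSpace α]

lemma mutuallySingular_of_null_of_eq_one {P ν : Measure α} [IsProbabilityMeasure ν] {N : Set α}
    (hN : MeasurableSet N) (hPN : P N = 0) (hνN : ν N = 1) : ν ⟂ₘ P :=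
  ⟨Nᶜ, hN.compl, (prob_compl_eq_zero_iff hN).2 hνN, by rwa [compl_compl]⟩

lemma isProbabilityMeasure_Qmix (P μ : Measure α) [IsProbabilityMeasure P]
    [IsProbabilityMeasure μ] {e : ℝ} (he : e ∈ Set.Icc (0 : ℝ) 1) :
    IsProbabilityMeasure (Qmix P μ e) := by
  refine ⟨?_⟩
  rw [Qmix, Measure.add_apply, Measure.smul_apply, Measure.smul_apply, measure_univ, measure_univ,
    smul_eq_mul, smul_eq_mul, mul_one, mul_one,
    ← ENNReal.ofReal_add (sub_nonneg.2 he.2) he.1, sub_add_cancel, ENNReal.ofReal_one]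

/-- The strength `ε̃` of the component `μ̃` in a signal of strength `e` whose singular part has mass
`r`; it is `0 / 0 = 0` when `e = r = 1`. -/
def regularStrength (e r : ℝ) : ℝ := e * (1 - r) / (1 - e * r)

variable {e r : ℝ}

lemma regularStrength_mem_Icc (he : e ∈ Set.Icc (0 : ℝ) 1) (hr : r ∈ Set.Icc (0 : ℝ) 1) :
    regularStrength e r ∈ Set.Icc (0 : ℝ) 1 :=
  unitInterval.div_mem (mul_nonneg he.1 (sub_nonneg.2 hr.2))
    (sub_nonneg.2 (unitInterval.mul_mem he hr).2) (by linarith [he.2])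

lemma one_sub_mul_mul_regularStrength (he : e ∈ Set.Icc (0 : ℝ) 1) (hr : r ∈ Set.Icc (0 : ℝ) 1) :
    (1 - e * r) * regularStrength e r = e * (1 - r) := by
  rcases eq_or_ne (1 - e * r) 0 with h | h
  · have hr1 : r = 1 := by nlinarith [he.1, he.2, hr.1, hr.2]
    rw [h, zero_mul, hr1, sub_self, mul_zero]
  · exact mul_div_cancel₀ _ h

lemma Qmix_Qmix (P μt ν : Measure α) (he : e ∈ Set.Icc (0 : ℝ) 1) (hr : r ∈ Set.Icc (0 : ℝ) 1) :
    Qmix P (Qmix μt ν r) e =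
      ENNReal.ofReal (1 - e * r) • Qmix P μt (regularStrength e r) +
        ENNReal.ofReal (e * r) • ν := by
  have hden : 0 ≤ 1 - e * r := sub_nonneg.2 (unitInterval.mul_mem he hr).2
  have hstrength := one_sub_mul_mul_regularStrength he hr
  have hnull : (1 - e * r) * (1 - regularStrength e r) = 1 - e := by
    rw [mul_sub, hstrength]; ring
  simp only [Qmix, smul_add, smul_smul, ← ENNReal.ofReal_mul he.1, ← ENNReal.ofReal_mul hden,
    hstrength, hnull, add_assoc]

/-- The probability that, under `Q_(n)`, no observation is drawn from the singular part of its
signal. -/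
def regularMass (ε κ : ℕ → ℕ → ℝ) (k : ℕ → ℕ) (n : ℕ) : ℝ≥0∞ :=
  ∏ i ∈ Finset.range (k n), ENNReal.ofReal (1 - ε n i * κ n i)

variable {P μ μt νs : ℕ → ℕ → Measure α} {ε κ : ℕ → ℕ → ℝ} {k : ℕ → ℕ}

lemma tendsto_iSup_mul_zero (hε : ∀ n i, ε n i ∈ Set.Icc (0 : ℝ) 1)
    (hκ : ∀ n i, κ n i ∈ Set.Icc (0 : ℝ) 1)
    (hmax : Tendsto (fun n => ⨆ i : Fin (k n), ε n i) atTop (𝓝 0)) :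
    Tendsto (fun n => ⨆ i : Fin (k n), ε n i * κ n i) atTop (𝓝 0) :=
  squeeze_zero (fun n => Real.iSup_nonneg fun i => (unitInterval.mul_mem (hε n i) (hκ n i)).1)
    (fun n => ciSup_mono (Set.finite_range _).bddAbove fun i =>
      mul_le_of_le_one_right (hε n i).1 (hκ n i).2) hmax

lemma regularMass_le_one (hε : ∀ n i, ε n i ∈ Set.Icc (0 : ℝ) 1)
    (hκ : ∀ n i, κ n i ∈ Set.Icc (0 : ℝ) 1) (n : ℕ) : regularMass ε κ k n ≤ 1 :=
  Finset.prod_le_one' fun i _ =>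
    ENNReal.ofReal_le_one.2 (sub_le_self 1 (unitInterval.mul_mem (hε n i) (hκ n i)).1)

lemma regularMass_eq_ofReal (hε : ∀ n i, ε n i ∈ Set.Icc (0 : ℝ) 1)
    (hκ : ∀ n i, κ n i ∈ Set.Icc (0 : ℝ) 1) (n : ℕ) :
    regularMass ε κ k n =
      ENNReal.ofReal (∏ i ∈ Finset.range (k n), (1 - ε n i * κ n i)) :=
  (ENNReal.ofReal_prod_of_nonneg fun i _ =>
    sub_nonneg.2 (unitInterval.mul_mem (hε n i) (hκ n i)).2).symm

lemma tendsto_regularMass (hε : ∀ n i, ε n i ∈ Set.Icc (0 : ℝ) 1)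
    (hκ : ∀ n i, κ n i ∈ Set.Icc (0 : ℝ) 1)
    (hmax : Tendsto (fun n => ⨆ i : Fin (k n), ε n i * κ n i) atTop (𝓝 0)) {c : ℝ}
    (hsum : Tendsto (fun n => ∑ i ∈ Finset.range (k n), ε n i * κ n i) atTop (𝓝 c)) :
    Tendsto (regularMass ε κ k) atTop (𝓝 (ENNReal.ofReal (Real.exp (-c)))) := by
  simp_rw [funext (regularMass_eq_ofReal hε hκ)]
  refine (ENNReal.continuous_ofReal.tendsto _).comp (tendsto_prod_one_sub hmax
    (fun n i _ => (unitInterval.mul_mem (hε n i) (hκ n i)).1) (fun n i hi => ?_) hsum)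
  exact le_ciSup (f := fun j : Fin (k n) => ε n j * κ n j) (Set.finite_range _).bddAbove
    ⟨i, Finset.mem_range.1 hi⟩

lemma tendsto_regularMass_zero (hε : ∀ n i, ε n i ∈ Set.Icc (0 : ℝ) 1)
    (hκ : ∀ n i, κ n i ∈ Set.Icc (0 : ℝ) 1)
    (hsum : Tendsto (fun n => ∑ i ∈ Finset.range (k n), ε n i * κ n i) atTop atTop) :
    Tendsto (regularMass ε κ k) atTop (𝓝 0) := by
  simp_rw [funext (regularMass_eq_ofReal hε hκ)]
  rw [← ENNReal.ofReal_zero]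
  exact (ENNReal.continuous_ofReal.tendsto _).comp
    (tendsto_prod_one_sub_zero (fun n i _ => (unitInterval.mul_mem (hε n i) (hκ n i)).2) hsum)

lemma lawP_eq_map_piLLR (P μ : ℕ → ℕ → Measure α) (ε : ℕ → ℕ → ℝ) (k : ℕ → ℕ) (n : ℕ) :
    lawP P μ ε k n = (Measure.pi fun i : Fin (k n) => P n i).map
      (piLLR (fun i : Fin (k n) => Qmix (P n i) (μ n i) (ε n i)) fun i => P n i) :=
  rfl

lemma lawQ_eq_map_piLLR (P μ : ℕ → ℕ → Measure α) (ε : ℕ → ℕ → ℝ) (k : ℕ → ℕ) (n : ℕ) :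
    lawQ P μ ε k n = (Measure.pi fun i : Fin (k n) => Qmix (P n i) (μ n i) (ε n i)).map
      (piLLR (fun i : Fin (k n) => Qmix (P n i) (μ n i) (ε n i)) fun i => P n i) :=
  rfl

lemma isProbabilityMeasure_lawP [∀ n i, IsProbabilityMeasure (P n i)] (n : ℕ) :
    IsProbabilityMeasure (lawP P μ ε k n) := by
  rw [lawP_eq_map_piLLR]
  exact Measure.isProbabilityMeasure_map (measurable_piLLR _ _).aemeasurable

lemma isProbabilityMeasure_lawQ [∀ n i, IsProbabilityMeasure (P n i)]
    [∀ n i, IsProbabilityMeasure (μ n i)] (hε : ∀ n i, ε n i ∈ Set.Icc (0 : ℝ) 1) (n : ℕ) :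
    IsProbabilityMeasure (lawQ P μ ε k n) := by
  have (i : Fin (k n)) := isProbabilityMeasure_Qmix (P n i) (μ n i) (hε n i)
  rw [lawQ_eq_map_piLLR]
  exact Measure.isProbabilityMeasure_map (measurable_piLLR _ _).aemeasurable

lemma lintegral_exp_lawP_le_one [∀ n i, IsProbabilityMeasure (P n i)]
    [∀ n i, IsProbabilityMeasure (μ n i)] (hε : ∀ n i, ε n i ∈ Set.Icc (0 : ℝ) 1) (n : ℕ) :
    ∫⁻ x, EReal.exp x ∂(lawP P μ ε k n) ≤ 1 := by
  have (i : Fin (k n)) := isProbabilityMeasure_Qmix (P n i) (μ n i) (hε n i)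
  rw [lawP_eq_map_piLLR]
  refine (lintegral_exp_map_piLLR_le _ _).trans_eq ?_
  simp only [measure_univ, Finset.prod_const_one]

lemma lawP_Qmix [∀ n i, IsProbabilityMeasure (P n i)] [∀ n i, IsProbabilityMeasure (μt n i)]
    [∀ n i, IsFiniteMeasure (νs n i)] (hε : ∀ n i, ε n i ∈ Set.Icc (0 : ℝ) 1)
    (hκ : ∀ n i, κ n i ∈ Set.Icc (0 : ℝ) 1) (hsing : ∀ n i, νs n i ⟂ₘ P n i) (n : ℕ) :
    lawP P (fun n i => Qmix (μt n i) (νs n i) (κ n i)) ε k n =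
      logShift (regularMass ε κ k n)
        (lawP P μt (fun n i => regularStrength (ε n i) (κ n i)) k n) := by
  have (i : Fin (k n)) := isProbabilityMeasure_Qmix (P n i) (μt n i)
    (regularStrength_mem_Icc (hε n i) (hκ n i))
  have (i : Fin (k n)) : IsFiniteMeasure (ENNReal.ofReal (ε n i * κ n i) • νs n i) :=
    (νs n i).smul_finite ENNReal.ofReal_ne_top
  simp_rw [lawP_eq_map_piLLR, Qmix_Qmix _ _ _ (hε n _) (hκ n _)]
  rw [map_piLLR_smul_add_pi (fun _ => ENNReal.ofReal_ne_top) fun i : Fin (k n) =>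
    (hsing n i).smul _, Fin.prod_univ_eq_prod_range fun i => ENNReal.ofReal (1 - ε n i * κ n i)]
  rfl

lemma lawQ_Qmix [∀ n i, IsProbabilityMeasure (P n i)] [∀ n i, IsProbabilityMeasure (μt n i)]
    [∀ n i, IsProbabilityMeasure (νs n i)] (hε : ∀ n i, ε n i ∈ Set.Icc (0 : ℝ) 1)
    (hκ : ∀ n i, κ n i ∈ Set.Icc (0 : ℝ) 1) (hsing : ∀ n i, νs n i ⟂ₘ P n i) (n : ℕ) :
    lawQ P (fun n i => Qmix (μt n i) (νs n i) (κ n i)) ε k n =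
      logShiftTop (regularMass ε κ k n)
        (lawQ P μt (fun n i => regularStrength (ε n i) (κ n i)) k n) := by
  have (i : Fin (k n)) := isProbabilityMeasure_Qmix (P n i) (μt n i)
    (regularStrength_mem_Icc (hε n i) (hκ n i))
  have (i : Fin (k n)) : IsFiniteMeasure (ENNReal.ofReal (ε n i * κ n i) • νs n i) :=
    (νs n i).smul_finite ENNReal.ofReal_ne_top
  have (i : Fin (k n)) : IsProbabilityMeasure
      (ENNReal.ofReal (1 - ε n i * κ n i) • Qmix (P n i) (μt n i)
        (regularStrength (ε n i) (κ n i)) + ENNReal.ofReal (ε n i * κ n i) • νs n i) := by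
    have := isProbabilityMeasure_Qmix (μt n i) (νs n i) (hκ n i)
    rw [← Qmix_Qmix _ _ _ (hε n i) (hκ n i)]
    exact isProbabilityMeasure_Qmix _ _ (hε n i)
  simp_rw [lawQ_eq_map_piLLR, Qmix_Qmix _ _ _ (hε n _) (hκ n _)]
  rw [map_piLLR_pi_smul_add
    (fun i : Fin (k n) => ENNReal.ofReal_le_one.2 (sub_le_self 1
      (unitInterval.mul_mem (hε n i) (hκ n i)).1)) fun i : Fin (k n) => (hsing n i).smul _,
    Fin.prod_univ_eq_prod_range fun i => ENNReal.ofReal (1 - ε n i * κ n i)]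
  rfl

end DetectionModel

theorem statement7_general {α : Type*} [MeasurableSpace α]
    (k : ℕ → ℕ) (P μ μt νs : ℕ → ℕ → Measure α) (ε κ : ℕ → ℕ → ℝ)
    [∀ n i, IsProbabilityMeasure (P n i)] [∀ n i, IsProbabilityMeasure (μt n i)]
    [∀ n i, IsProbabilityMeasure (νs n i)]
    (hε : ∀ n i, ε n i ∈ Set.Icc (0 : ℝ) 1) (hκ : ∀ n i, κ n i ∈ Set.Icc (0 : ℝ) 1)
    (hmax : Tendsto (fun n => ⨆ i : Fin (k n), ε n i * κ n i) atTop (𝓝 0))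
    (hsing : ∀ n i, νs n i ⟂ₘ P n i) (hdecomp : ∀ n i, μ n i = Qmix (μt n i) (νs n i) (κ n i))
    (νt1 νt2 : Measure EReal) [IsProbabilityMeasure νt1] [IsProbabilityMeasure νt2]
    (hwtP : WeakLim (lawP P μt (fun n i => regularStrength (ε n i) (κ n i)) k) νt1)
    (hwtQ : WeakLim (lawQ P μt (fun n i => regularStrength (ε n i) (κ n i)) k) νt2) :
    (∀ c : ℝ,
      Tendsto (fun n => ∑ i ∈ Finset.range (k n), ε n i * κ n i) atTop (𝓝 c) →
      WeakLim (lawP P μ ε k) (νt1.map (fun x : EReal => x + ((-c : ℝ) : EReal))) ∧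
      WeakLim (lawQ P μ ε k)
        (ENNReal.ofReal (Real.exp (-c)) • νt2.map (fun x : EReal => x + ((-c : ℝ) : EReal)) +
          ENNReal.ofReal (1 - Real.exp (-c)) • Measure.dirac ⊤)) ∧
    ((Tendsto (fun n => ∑ i ∈ Finset.range (k n), ε n i * κ n i) atTop atTop ∨
        (νt1 {⊥} = 1 ∧ νt2 {⊤} = 1)) →
      WeakLim (lawP P μ ε k) (Measure.dirac ⊥) ∧ WeakLim (lawQ P μ ε k) (Measure.dirac ⊤)) := by
  have hεt (n i : ℕ) := regularStrength_mem_Icc (hε n i) (hκ n i)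
  have := isProbabilityMeasure_lawP (P := P) (μ := μt) (k := k)
    (ε := fun n i => regularStrength (ε n i) (κ n i))
  have := isProbabilityMeasure_lawQ (P := P) (μ := μt) (k := k) hεt
  have hexp := lintegral_exp_lawP_le_one (P := P) (μ := μt) (k := k) hεt
  have hp_le := regularMass_le_one (k := k) hε hκ
  obtain rfl : μ = fun n i => Qmix (μt n i) (νs n i) (κ n i) := funext₂ hdecomp
  rw [funext (lawP_Qmix hε hκ hsing), funext (lawQ_Qmix hε hκ hsing)]
  refine ⟨fun c hc => ?_, ?_⟩
  · have hp := tendsto_regularMass hε hκ hmax hc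
    rw [← logShift_ofReal_exp, ← logShiftTop_ofReal_exp]
    exact ⟨weakLim_logShift_of_lintegral_exp_le hwtP ENNReal.one_ne_top hexp hp
      ENNReal.ofReal_ne_top, weakLim_logShiftTop hwtQ hp hp_le⟩
  · rintro (hinf | ⟨hbot, htop⟩)
    · have hp := tendsto_regularMass_zero hε hκ hinf
      rw [← logShift_zero νt1, ← logShiftTop_zero νt2]
      exact ⟨weakLim_logShift_of_lintegral_exp_le hwtP ENNReal.one_ne_top hexp hp
        ENNReal.zero_ne_top, weakLim_logShiftTop hwtQ hp hp_le⟩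
    · rw [eq_dirac_of_singleton_eq_one hbot] at hwtP
      rw [eq_dirac_of_singleton_eq_one htop] at hwtQ
      exact ⟨weakLim_logShift_dirac_bot hwtP ENNReal.one_ne_top hexp hp_le,
        weakLim_logShiftTop_dirac_top hwtQ hp_le⟩

/-- violation of absolute continuity: with the Lebesgue decomposition
`μ_{n,i} = (1−κ_{n,i})·μ̃_{n,i} + κ_{n,i}·ν_{n,i}` and `ε̃_{n,i} = ε_{n,i}(1−κ_{n,i})/(1−ε_{n,i}κ_{n,i})`,
the limits of `T_n` are obtained from those of `T̃_n` by a shift by `−c` under the null and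
additionally mixing with mass `1 − e^{−c}` at `+∞` under the alternative, where
`c = lim Σ_i ε_{n,i}κ_{n,i}`; if `c = ∞`, or if `ξ̃1 ≡ −∞` and `ξ̃2 ≡ +∞`, then
`ξ1 ≡ −∞` and `ξ2 ≡ +∞`. -/
theorem statement7 {α : Type*} [MeasurableSpace α]
    (k : ℕ → ℕ) (P μ μt νs : ℕ → ℕ → Measure α) (ε κ : ℕ → ℕ → ℝ)
    (Nset : ℕ → ℕ → Set α)
    (hk : Tendsto k atTop atTop)
    (hP : ∀ n i, IsProbabilityMeasure (P n i))
    (hμ : ∀ n i, IsProbabilityMeasure (μ n i))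
    (hμt : ∀ n i, IsProbabilityMeasure (μt n i))
    (hνs : ∀ n i, IsProbabilityMeasure (νs n i))
    (hε : ∀ n i, ε n i ∈ Set.Icc (0 : ℝ) 1)
    (hεmax : Tendsto (fun n => ⨆ i : Fin (k n), ε n i) atTop (nhds 0))
    -- Lebesgue decomposition of μ_{n,i}
    (hκ : ∀ n i, κ n i ∈ Set.Icc (0 : ℝ) 1)
    (hactilde : ∀ n i, μt n i ≪ P n i)
    (hnull : ∀ n i, MeasurableSet (Nset n i) ∧ P n i (Nset n i) = 0 ∧ νs n i (Nset n i) = 1)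
    (hdecomp : ∀ n i, μ n i =
      (ENNReal.ofReal (1 - κ n i)) • μt n i + (ENNReal.ofReal (κ n i)) • νs n i)
    -- limits of T̃_n (built from μ̃ and ε̃)
    (νt1 νt2 : Measure EReal)
    (hνt1 : IsProbabilityMeasure νt1) (hνt2 : IsProbabilityMeasure νt2)
    (hwtP : WeakLim (lawP P μt (fun n i => ε n i * (1 - κ n i) / (1 - ε n i * κ n i)) k) νt1)
    (hwtQ : WeakLim (lawQ P μt (fun n i => ε n i * (1 - κ n i) / (1 - ε n i * κ n i)) k) νt2) :
    -- conclusion, covering c ∈ [0,∞) and c = ∞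
    (∀ c : ℝ,
      Tendsto (fun n => ∑ i ∈ Finset.range (k n), ε n i * κ n i) atTop (nhds c) →
      WeakLim (lawP P μ ε k) (νt1.map (fun x : EReal => x + ((-c : ℝ) : EReal))) ∧
      WeakLim (lawQ P μ ε k)
        ((ENNReal.ofReal (Real.exp (-c))) •
            (νt2.map (fun x : EReal => x + ((-c : ℝ) : EReal))) +
          (ENNReal.ofReal (1 - Real.exp (-c))) • Measure.dirac (⊤ : EReal))) ∧
    ((Tendsto (fun n => ∑ i ∈ Finset.range (k n), ε n i * κ n i) atTop atTop ∨
        (νt1 {⊥} = 1 ∧ νt2 {⊤} = 1)) →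
      WeakLim (lawP P μ ε k) (Measure.dirac (⊥ : EReal)) ∧
      WeakLim (lawQ P μ ε k) (Measure.dirac (⊤ : EReal))) := by
  have hsing (n i : ℕ) : νs n i ⟂ₘ P n i :=
    mutuallySingular_of_null_of_eq_one (hnull n i).1 (hnull n i).2.1 (hnull n i).2.2
  exact statement7_general k P μ μt νs ε κ hε hκ (tendsto_iSup_mul_zero hε hκ hεmax) hsing
    hdecomp νt1 νt2 hwtP hwtQ

end
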